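/- Margin preservation by feature selection: in the SVM dual setup, let ε ∈ (0,1), let X ∈ ℝ^{p×d} have rank ρ and compact singular value decomposition X = UΣV^T, let R ∈ ℝ^{d×r} be a matrix with ‖I_ρ − V^T R R^T V‖₂ ≤ ε/2. Suppose α* ∈ K maximizes f over K, α̃* ∈ K maximizes f̃ over K, and the dual optimality identities Σ_i α*_i = ‖X^T Y α*‖₂² and Σ_i α̃*_i = ‖R^T X^T Y α̃*‖₂² hold. Set w* = X^T Y α* and w̃* = R^T X^T Y α̃*. Then (1 − ε)·‖w̃*‖₂² ≤ ‖w*‖₂²; in particular, if w* ≠ 0 and w̃* ≠ 0, the margins γ* = 1/‖w*‖₂ and γ̃* = 1/‖w̃*‖₂ satisfy (γ̃*)² ≥ (1 − ε)·(γ*)². -/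

import Mathlib

open Matrix

/-- Euclidean norm of a vector in ℝ^n. -/
noncomputable def euclNorm {n : ℕ} (x : Fin n → ℝ) : ℝ := Real.sqrt (∑ i, x i ^ 2)

/-- Spectral norm (ℓ₂ operator norm) of a real matrix: the supremum of `‖A x‖₂`
over unit vectors `x`. -/
noncomputable def specNorm {m n : ℕ} (A : Matrix (Fin m) (Fin n) ℝ) : ℝ :=
  sSup {c : ℝ | ∃ x : Fin n → ℝ, euclNorm x = 1 ∧ c = euclNorm (A.mulVec x)}

/-- The SVM dual feasible set `K = {α : 0 ≤ αᵢ ≤ C, Σᵢ yᵢαᵢ = 0}`. -/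
def svmFeasible {p : ℕ} (y : Fin p → ℝ) (C : ℝ) (α : Fin p → ℝ) : Prop :=
  (∀ i, 0 ≤ α i ∧ α i ≤ C) ∧ ∑ i, y i * α i = 0

/-- The SVM dual objective `f(α) = Σᵢ αᵢ − (1/2)‖XᵀYα‖₂²`, where `Y = diag(y)`. -/
noncomputable def svmDualObj {p d : ℕ} (X : Matrix (Fin p) (Fin d) ℝ) (y : Fin p → ℝ)
    (α : Fin p → ℝ) : ℝ :=
  ∑ i, α i - (1 / 2) * euclNorm (Xᵀ.mulVec ((Matrix.diagonal y).mulVec α)) ^ 2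

/-- The reduced SVM dual objective `f̃(α) = Σᵢ αᵢ − (1/2)‖RᵀXᵀYα‖₂²`. -/
noncomputable def svmDualObjRed {p d r : ℕ} (X : Matrix (Fin p) (Fin d) ℝ)
    (R : Matrix (Fin d) (Fin r) ℝ) (y : Fin p → ℝ) (α : Fin p → ℝ) : ℝ :=
  ∑ i, α i - (1 / 2) * euclNorm (Rᵀ.mulVec (Xᵀ.mulVec ((Matrix.diagonal y).mulVec α))) ^ 2

theorem euclNorm_sq' {n : ℕ} (x : Fin n → ℝ) : euclNorm x ^ 2 = x ⬝ᵥ x := by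
  unfold euclNorm
  rw [Real.sq_sqrt (Finset.sum_nonneg fun i _ => sq_nonneg _)]
  simp [dotProduct, sq]

theorem euclNorm_nonneg' {n : ℕ} (x : Fin n → ℝ) : 0 ≤ euclNorm x := Real.sqrt_nonneg _

theorem euclNorm_smul' {n : ℕ} (c : ℝ) (hc : 0 ≤ c) (x : Fin n → ℝ) :
    euclNorm (c • x) = c * euclNorm x := by
  have h : euclNorm (c • x) ^ 2 = (c * euclNorm x) ^ 2 := by
    rw [mul_pow, euclNorm_sq', euclNorm_sq', smul_dotProduct, dotProduct_smul]
    simp only [smul_eq_mul]; ring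
  exact (sq_eq_sq₀ (euclNorm_nonneg' _) (mul_nonneg hc (euclNorm_nonneg' _))).1 h

theorem specNorm_bdd {m n : ℕ} (A : Matrix (Fin m) (Fin n) ℝ) :
    BddAbove {c : ℝ | ∃ x : Fin n → ℝ, euclNorm x = 1 ∧ c = euclNorm (A.mulVec x)} := by
  refine ⟨Real.sqrt (∑ i, ∑ j, A i j ^ 2), ?_⟩
  rintro c ⟨x, hx, rfl⟩
  apply Real.sqrt_le_sqrt
  apply Finset.sum_le_sum
  intro i _
  have h := Finset.sum_mul_sq_le_sq_mul_sq Finset.univ (fun j => A i j) x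
  have hx2 : ∑ j, x j ^ 2 = 1 := by
    have := euclNorm_sq' x
    rw [hx] at this
    simp only [dotProduct, ← sq] at this
    linarith
  rw [hx2, mul_one] at h
  exact h

theorem specNorm_bound {m n : ℕ} (A : Matrix (Fin m) (Fin n) ℝ) (z : Fin n → ℝ) :
    euclNorm (A.mulVec z) ≤ specNorm A * euclNorm z := by
  rcases (euclNorm_nonneg' z).eq_or_lt with h | h
  · have hz : z = 0 := by
      have := euclNorm_sq' z
      rw [← h] at this
      exact dotProduct_self_eq_zero.1 (by linarith)
    rw [← h, hz]
    simp [euclNorm]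
  · have h1 : euclNorm (A.mulVec ((euclNorm z)⁻¹ • z)) ≤ specNorm A := by
      apply le_csSup (specNorm_bdd A)
      refine ⟨_, ?_, rfl⟩
      rw [euclNorm_smul' _ (inv_nonneg.2 h.le), inv_mul_cancel₀ h.ne']
    rw [mulVec_smul, euclNorm_smul' _ (inv_nonneg.2 h.le), inv_mul_eq_div, div_le_iff₀ h] at h1
    exact h1

theorem specNorm_quad {n : ℕ} (A : Matrix (Fin n) (Fin n) ℝ) (c : ℝ) (hA : specNorm A ≤ c)
    (hc : 0 ≤ c) (z : Fin n → ℝ) : z ⬝ᵥ A.mulVec z ≤ c * (z ⬝ᵥ z) := by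
  have h1 : euclNorm (A.mulVec z) ≤ c * euclNorm z :=
    (specNorm_bound A z).trans (mul_le_mul_of_nonneg_right hA (euclNorm_nonneg' z))
  have h2 : (z ⬝ᵥ A.mulVec z) ^ 2 ≤ (euclNorm z * euclNorm (A.mulVec z)) ^ 2 := by
    have h := Finset.sum_mul_sq_le_sq_mul_sq Finset.univ z (A.mulVec z)
    rw [mul_pow, euclNorm_sq', euclNorm_sq']
    simpa only [dotProduct, ← sq] using h
  have h3 := abs_le_of_sq_le_sq h2 (mul_nonneg (euclNorm_nonneg' _) (euclNorm_nonneg' _))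
  have h4 := mul_le_mul_of_nonneg_left h1 (euclNorm_nonneg' z)
  rw [← euclNorm_sq']
  nlinarith [le_of_abs_le h3]

/-- **Theorem 1 (margin preservation by feature selection).** If
`‖I_ρ − VᵀRRᵀV‖₂ ≤ ε/2`, `α*` maximizes `f` over `K`, `α̃*` maximizes `f̃` over `K`,
and the dual optimality identities hold, then with `w* = XᵀYα*` and
`w̃* = RᵀXᵀYα̃*` one has `(1 − ε)‖w̃*‖₂² ≤ ‖w*‖₂²`; in particular, if `w* ≠ 0`
and `w̃* ≠ 0`, the margins `γ* = 1/‖w*‖₂` and `γ̃* = 1/‖w̃*‖₂` satisfy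
`(γ̃*)² ≥ (1 − ε)(γ*)²`. -/
theorem svm_margin_preservation
    (p d r ρ : ℕ) (ε : ℝ) (hε : ε ∈ Set.Ioo (0 : ℝ) 1)
    (X : Matrix (Fin p) (Fin d) ℝ) (hrank : X.rank = ρ)
    (U : Matrix (Fin p) (Fin ρ) ℝ) (S : Matrix (Fin ρ) (Fin ρ) ℝ)
    (V : Matrix (Fin d) (Fin ρ) ℝ)
    (hU : Uᵀ * U = 1) (hV : Vᵀ * V = 1)
    (hS : ∃ σ : Fin ρ → ℝ, (∀ i, 0 < σ i) ∧ S = Matrix.diagonal σ)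
    (hX : X = U * S * Vᵀ)
    (R : Matrix (Fin d) (Fin r) ℝ)
    (hE : specNorm ((1 : Matrix (Fin ρ) (Fin ρ) ℝ) - Vᵀ * R * Rᵀ * V) ≤ ε / 2)
    (y : Fin p → ℝ) (hy : ∀ i, y i = 1 ∨ y i = -1)
    (C : ℝ) (hC : 0 < C)
    (αs : Fin p → ℝ) (hαs : svmFeasible y C αs)
    (hαsmax : ∀ β, svmFeasible y C β → svmDualObj X y β ≤ svmDualObj X y αs)
    (hid1 : ∑ i, αs i = euclNorm (Xᵀ.mulVec ((Matrix.diagonal y).mulVec αs)) ^ 2)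
    (αt : Fin p → ℝ) (hαt : svmFeasible y C αt)
    (hαtmax : ∀ β, svmFeasible y C β → svmDualObjRed X R y β ≤ svmDualObjRed X R y αt)
    (hid2 : ∑ i, αt i
      = euclNorm (Rᵀ.mulVec (Xᵀ.mulVec ((Matrix.diagonal y).mulVec αt))) ^ 2) :
    (1 - ε) * euclNorm (Rᵀ.mulVec (Xᵀ.mulVec ((Matrix.diagonal y).mulVec αt))) ^ 2
        ≤ euclNorm (Xᵀ.mulVec ((Matrix.diagonal y).mulVec αs)) ^ 2 ∧
    (Xᵀ.mulVec ((Matrix.diagonal y).mulVec αs) ≠ 0 →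
     Rᵀ.mulVec (Xᵀ.mulVec ((Matrix.diagonal y).mulVec αt)) ≠ 0 →
     (1 - ε) * (1 / euclNorm (Xᵀ.mulVec ((Matrix.diagonal y).mulVec αs))) ^ 2
       ≤ (1 / euclNorm (Rᵀ.mulVec (Xᵀ.mulVec ((Matrix.diagonal y).mulVec αt)))) ^ 2) := by
  obtain ⟨h0, h1⟩ := hε
  have key : (1 - ε / 2) * euclNorm (Xᵀ.mulVec ((Matrix.diagonal y).mulVec αt)) ^ 2 ≤
      euclNorm (Rᵀ.mulVec (Xᵀ.mulVec ((Matrix.diagonal y).mulVec αt))) ^ 2 := by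
    generalize (Matrix.diagonal y).mulVec αt = a
    have hXa : Xᵀ.mulVec a = V.mulVec ((U * S)ᵀ.mulVec a) := by
      rw [hX, transpose_mul, transpose_transpose, mulVec_mulVec]
    rw [hXa]
    generalize (U * S)ᵀ.mulVec a = z
    have hq := specNorm_quad _ _ hE (by linarith) z
    have e1 : V.mulVec z ⬝ᵥ V.mulVec z = z ⬝ᵥ z := by
      rw [dotProduct_mulVec, vecMul_mulVec, hV, vecMul_one]
    have e2 : Rᵀ.mulVec (V.mulVec z) ⬝ᵥ Rᵀ.mulVec (V.mulVec z) =
        z ⬝ᵥ (Vᵀ * R * Rᵀ * V).mulVec z := by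
      rw [mulVec_mulVec, dotProduct_mulVec, vecMul_mulVec, ← dotProduct_mulVec, transpose_mul,
        transpose_transpose, ← Matrix.mul_assoc]
    rw [sub_mulVec, one_mulVec, dotProduct_sub] at hq
    rw [euclNorm_sq', euclNorm_sq', e1, e2]
    linarith
  have hmain := hαsmax αt hαt
  unfold svmDualObj at hmain
  rw [hid1, hid2] at hmain
  have hfirst : (1 - ε) * euclNorm (Rᵀ.mulVec (Xᵀ.mulVec ((Matrix.diagonal y).mulVec αt))) ^ 2
        ≤ euclNorm (Xᵀ.mulVec ((Matrix.diagonal y).mulVec αs)) ^ 2 := by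
    have hq := sq_nonneg (euclNorm (Xᵀ.mulVec ((Matrix.diagonal y).mulVec αt)))
    have hw := sq_nonneg (euclNorm (Xᵀ.mulVec ((Matrix.diagonal y).mulVec αs)))
    generalize euclNorm (Rᵀ.mulVec (Xᵀ.mulVec ((Matrix.diagonal y).mulVec αt))) ^ 2 = t at *
    generalize euclNorm (Xᵀ.mulVec ((Matrix.diagonal y).mulVec αt)) ^ 2 = q at *
    generalize euclNorm (Xᵀ.mulVec ((Matrix.diagonal y).mulVec αs)) ^ 2 = w at *
    have h2 : 2 * t - q ≤ w := by linarith
    have h3 := mul_le_mul_of_nonneg_left h2 (by linarith : 0 ≤ 1 - ε / 2)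
    nlinarith [mul_nonneg h0.le hw]
  refine ⟨hfirst, fun hs ht => ?_⟩
  have pos : ∀ {n : ℕ} (x : Fin n → ℝ), x ≠ 0 → 0 < euclNorm x ^ 2 := by
    intro n x hx
    refine lt_of_le_of_ne (sq_nonneg _) fun h => hx ?_
    rw [euclNorm_sq'] at h
    exact dotProduct_self_eq_zero.1 h.symm
  have p1 := pos _ hs
  have p2 := pos _ ht
  rw [div_pow, div_pow, one_pow, mul_one_div, div_le_div_iff₀ p1 p2, one_mul]
  exact hfirst
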